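/- The SUSY operator intertwines the transfer matrices of adjacent lengths up to the factor d(u)²: for every N ≥ 2 and every u ∈ ℂ, Q^(N) ∘ t^(N)(u) = d(u)² · t^(N−1)(u) ∘ Q^(N) as linear maps V^⊗N → V^⊗(N−1). -/

import Mathlib

noncomputable section
open Complex Matrix

/-- Spin configurations of a chain of `N` sites: `true` encodes `v₊`, `false` encodes `v₋`.
The site with label `i ∈ {1,…,N}` corresponds to the index `i-1 : Fin N`
(so the leftmost site `N` is the index `N-1`). -/
abbrev Conf (N : ℕ) := Fin N → Bool

/-- The combinatorial-point parameter `η = 2πi/3`. -/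
def ηc : ℂ := 2 * (Real.pi : ℂ) * Complex.I / 3

/-- `a(u) = sinh(u+η)/sinh η`. -/
def aF (u : ℂ) : ℂ := Complex.sinh (u + ηc) / Complex.sinh ηc
/-- `b(u) = sinh(u)/sinh η`. -/
def bF (u : ℂ) : ℂ := Complex.sinh u / Complex.sinh ηc
/-- `c(u) = 1`. -/
def cF (_ : ℂ) : ℂ := 1
/-- `d(u) = sinh(u-η)/sinh η`. -/
def dF (u : ℂ) : ℂ := Complex.sinh (u - ηc) / Complex.sinh ηc
/-- The R-matrix `R(u)` on `V⊗V` in the ordered basis `(v₊⊗v₊, v₊⊗v₋, v₋⊗v₊, v₋⊗v₋)`: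
`[[a,0,0,0],[0,b,c,0],[0,c,b,0],[0,0,0,a]]`. -/
def Rm (u : ℂ) : Matrix (Bool × Bool) (Bool × Bool) ℂ :=
  Matrix.of fun o i =>
    if o = i then (if o.1 = o.2 then aF u else bF u)
    else if o.1 = i.2 ∧ o.2 = i.1 ∧ o.1 ≠ o.2 then cF u
    else 0

/-- The boundary K-matrix `K⁻(u) = diag(d(u), -a(u))` in the basis `(v₊, v₋)`. -/
def Km (u : ℂ) : Matrix Bool Bool ℂ :=
  Matrix.of fun o i => if o = i then (if o then dF u else -aF u) else 0

/-- `R₀ᵢ(u)`: the matrix `R(u)` applied to `V₀ ⊗ Vᵢ` (auxiliary space first), identity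
elsewhere, on `V₀ ⊗ V^⊗N`; here the site with label `i` is the index `i-1`. -/
def R0i (N : ℕ) (u : ℂ) (i : Fin N) :
    Matrix (Bool × Conf N) (Bool × Conf N) ℂ :=
  Matrix.of fun x y =>
    if ∀ j, j ≠ i → x.2 j = y.2 j then Rm u (x.1, x.2 i) (y.1, y.2 i) else 0

/-- `Rᵢ₀(u)`: the matrix `R(u)` applied to `Vᵢ ⊗ V₀` (auxiliary space second), identity
elsewhere, on `V₀ ⊗ V^⊗N`. -/
def Ri0 (N : ℕ) (u : ℂ) (i : Fin N) :
    Matrix (Bool × Conf N) (Bool × Conf N) ℂ :=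
  Matrix.of fun x y =>
    if ∀ j, j ≠ i → x.2 j = y.2 j then Rm u (x.2 i, x.1) (y.2 i, y.1) else 0

/-- `T^(N)(u) = R₀₁(u) R₀₂(u) ⋯ R₀N(u)`. -/
def Tmono (N : ℕ) (u : ℂ) : Matrix (Bool × Conf N) (Bool × Conf N) ℂ :=
  (List.ofFn fun i : Fin N => R0i N u i).prod

/-- `T̄^(N)(u) = R_{N0}(u) ⋯ R_{20}(u) R_{10}(u)`. -/
def Tbar (N : ℕ) (u : ℂ) : Matrix (Bool × Conf N) (Bool × Conf N) ℂ :=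
  (List.ofFn fun i : Fin N => Ri0 N u i).reverse.prod

/-- `K₀⁻(u)`: the matrix `K⁻(u)` acting on the auxiliary space `V₀`, identity on `V^⊗N`. -/
def K0m (N : ℕ) (u : ℂ) : Matrix (Bool × Conf N) (Bool × Conf N) ℂ :=
  Matrix.of fun x y => if x.2 = y.2 then Km u x.1 y.1 else 0

/-- The double-row monodromy matrix `U^(N)(u) = T̄^(N)(u) K₀⁻(u) T^(N)(u)`. -/
def Umono (N : ℕ) (u : ℂ) : Matrix (Bool × Conf N) (Bool × Conf N) ℂ :=
  Tbar N u * K0m N u * Tmono N u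

/-- `𝒜^(N)(u)`: the `(v₊, v₊)` auxiliary-space block of `U^(N)(u)`. -/
def Aop (N : ℕ) (u : ℂ) : Matrix (Conf N) (Conf N) ℂ :=
  Matrix.of fun s t => Umono N u (true, s) (true, t)
/-- `ℬ^(N)(u)`: the `(v₊, v₋)` auxiliary-space block of `U^(N)(u)`. -/
def Bop (N : ℕ) (u : ℂ) : Matrix (Conf N) (Conf N) ℂ :=
  Matrix.of fun s t => Umono N u (true, s) (false, t)
/-- `𝒞^(N)(u)`: the `(v₋, v₊)` auxiliary-space block of `U^(N)(u)`. -/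
def Cop (N : ℕ) (u : ℂ) : Matrix (Conf N) (Conf N) ℂ :=
  Matrix.of fun s t => Umono N u (false, s) (true, t)
/-- `𝒟^(N)(u)`: the `(v₋, v₋)` auxiliary-space block of `U^(N)(u)`. -/
def Dop (N : ℕ) (u : ℂ) : Matrix (Conf N) (Conf N) ℂ :=
  Matrix.of fun s t => Umono N u (false, s) (false, t)

/-- The transfer matrix
`t^(N)(u) = (sinh u / sinh η) 𝒜^(N)(u) - (sinh(u+2η)/sinh η) 𝒟^(N)(u)`. -/
def tOp (N : ℕ) (u : ℂ) : Matrix (Conf N) (Conf N) ℂ :=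
  (Complex.sinh u / Complex.sinh ηc) • Aop N u
    - (Complex.sinh (u + 2 * ηc) / Complex.sinh ηc) • Dop N u

/-- The pseudovacuum `Ω^(N) = v₊ ⊗ ⋯ ⊗ v₊`. -/
def Omega (N : ℕ) : Conf N → ℂ := fun s => if ∀ j, s j = true then 1 else 0

/-- `E^ε ⊗ X : V^⊗(n+2) → V^⊗(n+1)`: the linear functional `E^ε : V → ℂ`, `v_ε ↦ 1`
(zero on the other basis vector), applied to the leftmost site `N = n+2`, tensored with
the operator `X` on the remaining sites `n+1,…,1`.  Here `e = true` encodes `ε = +`. -/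
def Etens (n : ℕ) (e : Bool) (X : Matrix (Conf (n + 1)) (Conf (n + 1)) ℂ) :
    Matrix (Conf (n + 1)) (Conf (n + 2)) ℂ :=
  Matrix.of fun o i =>
    (if i (Fin.last (n + 1)) = e then 1 else 0) * X o (fun j => i (Fin.castSucc j))

/-- `F ⊗ X` : the one-site operator `F` applied to the leftmost site `N+1` of a chain of
`N+1` sites, tensored with the operator `X` on the remaining sites `N,…,1`. -/
def siteTens (N : ℕ) (F : Matrix Bool Bool ℂ) (X : Matrix (Conf N) (Conf N) ℂ) :
    Matrix (Conf (N + 1)) (Conf (N + 1)) ℂ :=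
  Matrix.of fun o i =>
    F (o (Fin.last N)) (i (Fin.last N)) * X (fun j => o (Fin.castSucc j)) (fun j => i (Fin.castSucc j))

/-- `E^ε_{ε'} : V → V` sends `v_ε ↦ v_{ε'}` and the other basis vector to `0`
(`true` encodes `+`). -/
def Eop (e e' : Bool) : Matrix Bool Bool ℂ :=
  Matrix.of fun o i => if i = e ∧ o = e' then 1 else 0
/-- The local SUSY generator `q_{i,i+1}` (with `i = k+1`) on a chain of `n+2` sites:
it applies `q : V⊗V → V`, `q(v₊⊗v₊) = v₋` (zero on the other basis vectors), to the
adjacent sites `i, i+1` (merging them into the single site `i` of the output chain of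
`n+1` sites) and the identity to all other sites. -/
def qMerge (n : ℕ) (k : Fin (n + 1)) : Matrix (Conf (n + 1)) (Conf (n + 2)) ℂ :=
  Matrix.of fun o i =>
    if i (Fin.castSucc k) = true ∧ i (Fin.succ k) = true ∧ o k = false ∧
        (∀ j : Fin (n + 1),
          ((j : ℕ) < (k : ℕ) → o j = i (Fin.castSucc j)) ∧
          ((k : ℕ) < (j : ℕ) → o j = i (Fin.succ j)))
    then 1 else 0

/-- The SUSY operator `Q^(N)` for `N = n+2`:
`Q^(N) = ∑_{i=1}^{N-1} (-1)^{i+1} q_{i,i+1} : V^⊗N → V^⊗(N-1)`. -/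
def Qop (n : ℕ) : Matrix (Conf (n + 1)) (Conf (n + 2)) ℂ :=
  ∑ k : Fin (n + 1), ((-1 : ℂ) ^ (k : ℕ)) • qMerge n k

/-- The local operator `q†_i` (with `i = k+1`) on a chain of `n+1` sites: it applies
`q† : V → V⊗V`, `q†(v₋) = v₊⊗v₊`, `q†(v₊) = 0`, to site `i` (splitting it into the two
adjacent sites `i, i+1` of the output chain of `n+2` sites) and the identity elsewhere. -/
def qSplit (n : ℕ) (k : Fin (n + 1)) : Matrix (Conf (n + 2)) (Conf (n + 1)) ℂ :=
  Matrix.of fun o i =>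
    if o (Fin.castSucc k) = true ∧ o (Fin.succ k) = true ∧ i k = false ∧
        (∀ j : Fin (n + 1),
          ((j : ℕ) < (k : ℕ) → i j = o (Fin.castSucc j)) ∧
          ((k : ℕ) < (j : ℕ) → i j = o (Fin.succ j)))
    then 1 else 0

/-- The adjoint SUSY operator `Q^(N)†` for `N = n+2`:
`Q^(N)† = ∑_{i=1}^{N-1} (-1)^{i+1} q†_i : V^⊗(N-1) → V^⊗N`. -/
def Qdag (n : ℕ) : Matrix (Conf (n + 2)) (Conf (n + 1)) ℂ :=
  ∑ k : Fin (n + 1), ((-1 : ℂ) ^ (k : ℕ)) • qSplit n k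

/-!
Split into its four auxiliary blocks `𝒜, ℬ, 𝒞, 𝒟`, the double-row monodromy matrix obeys a linear
recursion: a new leftmost site sends the blocks `X` to `∑ L_{αγ} L_{δβ} ⊗ X_{γδ}`, with `L` the Lax
operator of that site. The SUSY operator obeys `Q^(N+1) = 1 ⊗ Q^(N) ± (merging of the two leftmost
sites)`. At `η = 2πi/3` one has `a² + ab + b² = 1` and `d = -a - b`, and then merging commutes with
the addition of two sites up to the factor `d²` and a defect that acts on the leftmost site only
through the functionals `E^± : V → ℂ`. The defects telescope along the recursion and, since the
K-matrix kills the one left over at length one, induction on `N` gives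
`Q 𝒜 = d² 𝒜 Q ∓ d ℬ E⁺` and `Q 𝒟 = d² 𝒟 Q ∓ b ℬ E⁺`.
As `sinh (u + 2η) = sinh (u - η)`, the transfer matrix is `b 𝒜 - d 𝒟`, where the defects cancel.
-/

/-- `F ⊗ M`, with `F` acting on the leftmost site: the generalization of `siteTens` to
operators `M` between chains of different lengths, bundled as a bilinear map. -/
def leftTensor {R : Type*} [CommSemiring R] {m n : ℕ} :
    Matrix Bool Bool R →ₗ[R] Matrix (Conf m) (Conf n) R →ₗ[R]
      Matrix (Conf (m + 1)) (Conf (n + 1)) R :=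
  kroneckerBilinear.compr₂ (reindexLinearEquiv R R
    (Fin.snocEquiv fun _ => Bool) (Fin.snocEquiv fun _ => Bool)).toLinearMap

local infixl:100 "⊠" => leftTensor

section Tensor

variable {R : Type*} [CommSemiring R] {l m n : ℕ}

theorem leftTensor_apply (F : Matrix Bool Bool R) (M : Matrix (Conf m) (Conf n) R)
    (o : Conf (m + 1)) (i : Conf (n + 1)) :
    (F ⊠ M) o i = F (o (Fin.last m)) (i (Fin.last n)) * M (Fin.init o) (Fin.init i) :=
  rfl

theorem leftTensor_mul_leftTensor (F G : Matrix Bool Bool R) (M : Matrix (Conf l) (Conf m) R)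
    (M' : Matrix (Conf m) (Conf n) R) : F ⊠ M * G ⊠ M' = (F * G) ⊠ (M * M') :=
  (reindexLinearEquiv_mul R R _ _ _ _ _).trans
    (congrArg _ (mul_kronecker_mul F G M M').symm)

theorem one_leftTensor_one :
    (1 : Matrix Bool Bool R) ⊠ (1 : Matrix (Conf m) (Conf m) R) = 1 :=
  (congrArg _ one_kronecker_one).trans (reindexLinearEquiv_one R R _)

/-- The ring homomorphism `M ↦ 1 ⊗ M` adding an inert leftmost site. -/
def addSite (R : Type*) [CommSemiring R] (m : ℕ) :
    Matrix (Conf m) (Conf m) R →+* Matrix (Conf (m + 1)) (Conf (m + 1)) R where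
  toFun M := 1 ⊠ M
  map_one' := one_leftTensor_one
  map_mul' M M' := by rw [leftTensor_mul_leftTensor, one_mul]
  map_zero' := map_zero _
  map_add' := map_add _

theorem addSite_apply (M : Matrix (Conf m) (Conf m) R) : addSite R m M = 1 ⊠ M :=
  rfl

/-- The functional `v_s ↦ 1` (zero on the other basis vector) applied to the leftmost site,
tensored with the identity; thus `Etens n s X` is `X * leftBra ℂ (n + 1) s`. -/
def leftBra (R : Type*) [CommSemiring R] (m : ℕ) (s : Bool) : Matrix (Conf m) (Conf (m + 1)) R :=
  of fun o i => if s = i (Fin.last m) ∧ o = Fin.init i then 1 else 0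

theorem mul_leftBra_apply (s : Bool) (M : Matrix (Conf m) (Conf n) R) (o : Conf m)
    (i : Conf (n + 1)) :
    (M * leftBra R n s) o i =
      if s = i (Fin.last n) then M o (Fin.init i) else 0 := by
  simp [mul_apply, leftBra, ite_and]

theorem leftBra_mul_leftTensor (s : Bool) (F : Matrix Bool Bool R)
    (M : Matrix (Conf m) (Conf n) R) :
    leftBra R m s * F ⊠ M = ∑ t, F s t • (M * leftBra R n t) := by
  ext o i
  rw [mul_apply, ← (Fin.snocEquiv fun _ => Bool).sum_comp, Fintype.sum_prod_type]
  simp only [Matrix.sum_apply, Matrix.smul_apply, mul_leftBra_apply]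
  simp [leftBra, leftTensor_apply, ite_and, Fin.snocEquiv]

theorem leftBra_succ (s : Bool) :
    leftBra R (m + 1) s = ∑ t, single t s 1 ⊠ leftBra R m t := by
  ext o i
  have eq_init_iff : o = Fin.init i ↔
      o (Fin.last m) = i (Fin.last m).castSucc ∧ Fin.init o = Fin.init (Fin.init i) := by
    simp [funext_iff, Fin.forall_fin_succ', Fin.init, and_comm]
  simp only [leftBra, of_apply, eq_init_iff, Matrix.sum_apply, leftTensor_apply, single_apply,
    ite_and, ite_mul, one_mul, zero_mul, Finset.sum_ite_eq', Finset.mem_univ, if_true]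
  rfl

end Tensor

section Dressing

variable {R : Type*} [CommRing R] {l m n : ℕ}

/-- The six-vertex Lax operator: `lax a b α β` is the block of the R-matrix with weights
`a, b, c = 1` that takes the auxiliary state `β` to `α`, as an operator on one site. -/
def lax (a b : R) : Bool → Bool → Matrix Bool Bool R
  | true, true => diagonal fun s => if s then a else b
  | true, false => single false true 1
  | false, true => single true false 1
  | false, false => diagonal fun s => if s then b else a

/-- The one-site operator through which the auxiliary block `q` of a double-row monodromy
matrix contributes to the block `p` when a site is added. -/
def doubleLax (a b : R) (p q : Bool × Bool) : Matrix Bool Bool R :=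
  lax a b p.1 q.1 * lax a b q.2 p.2

/-- The passage from the auxiliary blocks of a double-row monodromy matrix to those of the
monodromy matrix with one more site on the left. -/
def dress (a b : R) : (Bool × Bool → Matrix (Conf m) (Conf n) R) →ₗ[R]
    (Bool × Bool → Matrix (Conf (m + 1)) (Conf (n + 1)) R) :=
  LinearMap.pi fun p => ∑ q, leftTensor (doubleLax a b p q) ∘ₗ LinearMap.proj q

theorem dress_apply (a b : R) (X : Bool × Bool → Matrix (Conf m) (Conf n) R) (p : Bool × Bool) :
    dress a b X p = ∑ q, doubleLax a b p q ⊠ X q := by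
  simp [dress]

theorem one_leftTensor_mul_dress (a b : R) (S : Matrix (Conf l) (Conf m) R)
    (X : Bool × Bool → Matrix (Conf m) (Conf n) R) (p : Bool × Bool) :
    1 ⊠ S * dress a b X p = dress a b (fun q => S * X q) p := by
  simp only [dress_apply, Matrix.mul_sum, leftTensor_mul_leftTensor, one_mul]

theorem dress_mul_one_leftTensor (a b : R) (X : Bool × Bool → Matrix (Conf l) (Conf m) R)
    (S : Matrix (Conf m) (Conf n) R) (p : Bool × Bool) :
    dress a b X p * 1 ⊠ S = dress a b (fun q => X q * S) p := by
  simp only [dress_apply, Matrix.sum_mul, leftTensor_mul_leftTensor, mul_one]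

theorem leftBra_mul_dress (a b : R) (s : Bool) (X : Bool × Bool → Matrix (Conf m) (Conf n) R)
    (p : Bool × Bool) :
    leftBra R m s * dress a b X p =
      ∑ q, ∑ t, doubleLax a b p q s t • (X q * leftBra R n t) := by
  simp only [dress_apply, Matrix.mul_sum, leftBra_mul_leftTensor]

/-- The coefficients of `boundary`. Writing `p, q` for pairs (row, column) of auxiliary states,
the nonzero ones say that the defect is `d ℬ E⁺` for `𝒜`, `b ℬ E⁺` for `𝒟`,
`(a 𝒜 + d 𝒟) E⁺ + ℬ E⁻` for `𝒞`, and `0` for `ℬ`, where `d = -a - b`. -/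
def boundaryCoeff (a b : R) : Bool → Bool × Bool → Bool × Bool → R
  | true, (true, true), (true, false) => -a - b
  | true, (false, false), (true, false) => b
  | true, (false, true), (true, true) => a
  | true, (false, true), (false, false) => -a - b
  | false, (false, true), (true, false) => 1
  | _, _, _ => 0

/-- The defect in the commutation of the SUSY operator with the auxiliary blocks `X` of a
double-row monodromy matrix; it acts on the leftmost site by the functionals `E^±`. -/
def boundary (a b : R) (X : Bool × Bool → Matrix (Conf m) (Conf n) R) (p : Bool × Bool) :
    Matrix (Conf m) (Conf (n + 1)) R :=
  ∑ q, ∑ s, boundaryCoeff a b s p q • (X q * leftBra R n s)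

theorem boundary_dress (a b : R) (X : Bool × Bool → Matrix (Conf m) (Conf n) R)
    (p : Bool × Bool) :
    boundary a b (dress a b X) p = ∑ r, ∑ t, (∑ q, ∑ s,
      boundaryCoeff a b s p q • (doubleLax a b q r * single t s 1)) ⊠ (X r * leftBra R n t) := by
  simp only [boundary, dress_apply, leftBra_succ, Matrix.mul_sum, Matrix.sum_mul,
    leftTensor_mul_leftTensor, Finset.smul_sum, map_sum, LinearMap.sum_apply, map_smul,
    LinearMap.smul_apply]
  simp only [Finset.sum_comm (γ := Bool) (α := Bool × Bool)]
  rw [Finset.sum_comm]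
  exact Fintype.sum_congr _ _ fun r => Fintype.sum_congr _ _ fun q => Finset.sum_comm

theorem dress_boundary (a b : R) (X : Bool × Bool → Matrix (Conf m) (Conf n) R)
    (p : Bool × Bool) :
    dress a b (boundary a b X) p = ∑ r, ∑ t, (∑ q,
      boundaryCoeff a b t q r • doubleLax a b p q) ⊠ (X r * leftBra R n t) := by
  simp only [boundary, dress_apply, map_sum, map_smul, LinearMap.sum_apply,
    LinearMap.smul_apply]
  rw [Finset.sum_comm]
  exact Fintype.sum_congr _ _ fun r => Finset.sum_comm

/-- The part of the SUSY operator that merges the two leftmost sites. -/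
def leftMerge (R : Type*) [CommSemiring R] (m : ℕ) : Matrix (Conf (m + 1)) (Conf (m + 2)) R :=
  single false true 1 ⊠ leftBra R m true

theorem doubleLax_merge {a b : R} (h : a ^ 2 + a * b + b ^ 2 = 1) (p r : Bool × Bool) (t : Bool) :
    ∑ q, doubleLax a b q r true t • (single false true 1 * doubleLax a b p q) =
      (if t then (-a - b) ^ 2 • (doubleLax a b p r * single false true 1) else 0)
        + ∑ q, boundaryCoeff a b t q r • doubleLax a b p q
        + ∑ q, ∑ s, boundaryCoeff a b s p q • (doubleLax a b q r * single t s 1) := by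
  obtain ⟨α, β⟩ := p
  obtain ⟨γ, δ⟩ := r
  ext o i
  simp only [Fintype.sum_prod_type, Fintype.sum_bool, Matrix.add_apply, Matrix.smul_apply,
    doubleLax, mul_apply, apply_ite (fun M : Matrix Bool Bool R => M o i), Matrix.zero_apply]
  cases α <;> cases β <;> cases γ <;> cases δ <;> cases t <;> cases o <;> cases i <;>
    simp [lax, boundaryCoeff] <;> grind

theorem leftMerge_mul_dress_dress {a b : R} (h : a ^ 2 + a * b + b ^ 2 = 1)
    (X : Bool × Bool → Matrix (Conf m) (Conf n) R) (p : Bool × Bool) :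
    leftMerge R m * dress a b (dress a b X) p =
      (-a - b) ^ 2 • (dress a b X p * leftMerge R n)
        + dress a b (boundary a b X) p + boundary a b (dress a b X) p := by
  have expand_left : leftMerge R m * dress a b (dress a b X) p = ∑ r, ∑ t, (∑ q,
      doubleLax a b q r true t • (single false true 1 * doubleLax a b p q)) ⊠
        (X r * leftBra R n t) := by
    simp only [leftMerge, dress_apply a b (dress a b X), Matrix.mul_sum, leftTensor_mul_leftTensor,
      leftBra_mul_dress, map_sum, map_smul, LinearMap.sum_apply, LinearMap.smul_apply]
    rw [Finset.sum_comm]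
    exact Fintype.sum_congr _ _ fun r => Finset.sum_comm
  have expand_right : dress a b X p * leftMerge R n = ∑ r, ∑ t,
      (if t then doubleLax a b p r * single false true 1 else 0) ⊠ (X r * leftBra R n t) := by
    simp [leftMerge, dress_apply, Matrix.sum_mul, leftTensor_mul_leftTensor]
  simp only [expand_left, expand_right, dress_boundary, boundary_dress, doubleLax_merge h,
    map_add, LinearMap.add_apply, Finset.sum_add_distrib]
  simp [Finset.smul_sum]

end Dressing

section SusyOperator

/-- The SUSY operator `Q^(m+1)`, including length `m + 1 = 1`, where it vanishes. -/
def susy (R : Type*) [CommRing R] : (m : ℕ) → Matrix (Conf m) (Conf (m + 1)) R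
  | 0 => 0
  | m + 1 => 1 ⊠ susy R m + (-1 : R) ^ m • leftMerge R m

theorem qMerge_castSucc (n : ℕ) (k : Fin (n + 1)) :
    qMerge (n + 1) k.castSucc = 1 ⊠ qMerge n k := by
  ext o i
  simp only [qMerge, of_apply, leftTensor_apply, one_apply, ite_mul, one_mul, zero_mul, ← ite_and]
  congr 1
  simp only [Fin.val_castSucc, Fin.forall_fin_succ' (n := n + 1), Fin.val_fin_lt, Fin.val_last,
    isEmpty_Prop, not_lt, Fin.is_le', IsEmpty.forall_iff, k.is_lt, Fin.succ_last,
    Nat.succ_eq_add_one, forall_const, true_and, Fin.init, Fin.castSucc_succ, eq_iff_iff]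
  grind

theorem qMerge_last (m : ℕ) : qMerge m (Fin.last m) = leftMerge ℂ m := by
  ext o i
  simp only [qMerge, of_apply, leftMerge, leftTensor_apply, single_apply, leftBra, ite_mul, one_mul,
    zero_mul, ← ite_and]
  congr 1
  simp only [Fin.succ_last, Nat.succ_eq_add_one, Fin.val_last, Fin.forall_fin_succ' (n := m),
    Fin.val_castSucc, Fin.is_lt, forall_const, isEmpty_Prop, not_lt, Fin.is_le',
    IsEmpty.forall_iff, and_true, lt_self_iff_false, and_self, Bool.false_eq, Bool.true_eq,
    Fin.init, funext_iff, eq_iff_iff]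
  grind

theorem Qop_eq_susy (n : ℕ) : Qop n = susy ℂ (n + 1) := by
  induction n with
  | zero => simp [Qop, susy, ← qMerge_last]
  | succ n ih =>
    rw [susy, ← ih, Qop, Fin.sum_univ_castSucc, ← qMerge_last]
    simp [qMerge_castSucc, Qop]

end SusyOperator

section Monodromy

/-- The ring isomorphism from operators on `V₀ ⊗ V^⊗N` to `2 × 2` matrices of operators on
`V^⊗N`. -/
def auxBlocks (N : ℕ) : Matrix (Bool × Conf N) (Bool × Conf N) ℂ ≃+*
    Matrix Bool Bool (Matrix (Conf N) (Conf N) ℂ) :=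
  (compRingEquiv Bool (Conf N) ℂ).symm

theorem Rm_apply (u : ℂ) (α o β i : Bool) :
    Rm u (α, o) (β, i) = lax (aF u) (bF u) α β o i := by
  cases α <;> cases o <;> cases β <;> cases i <;> simp [Rm, lax, cF]

theorem Rm_apply_swap (u : ℂ) (α o β i : Bool) : Rm u (o, α) (i, β) = Rm u (α, o) (β, i) := by
  cases α <;> cases o <;> cases β <;> cases i <;> simp [Rm]

theorem Ri0_eq_R0i (N : ℕ) (u : ℂ) (i : Fin N) : Ri0 N u i = R0i N u i := by
  ext x y
  simp only [Ri0, R0i, of_apply, Rm_apply_swap]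

/-- The R-matrix between the auxiliary space and the leftmost site, in auxiliary blocks. -/
def leftLax (u : ℂ) (N : ℕ) : Matrix Bool Bool (Matrix (Conf (N + 1)) (Conf (N + 1)) ℂ) :=
  of fun α β => lax (aF u) (bF u) α β ⊠ 1

theorem auxBlocks_R0i_last (N : ℕ) (u : ℂ) :
    auxBlocks (N + 1) (R0i (N + 1) u (Fin.last N)) = leftLax u N := by
  ext α β o i
  simp [auxBlocks, R0i, leftLax, leftTensor_apply, one_apply, Rm_apply, Fin.forall_fin_succ',
    Fin.init, funext_iff]

theorem auxBlocks_R0i_castSucc {N : ℕ} (u : ℂ) (k : Fin N) :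
    auxBlocks (N + 1) (R0i (N + 1) u k.castSucc) =
      (addSite ℂ N).mapMatrix (auxBlocks N (R0i N u k)) := by
  ext α β o i
  have last_ne : Fin.last N ≠ k.castSucc := (Fin.castSucc_ne_last k).symm
  simp only [auxBlocks, R0i, ne_eq, Fin.forall_fin_succ', Fin.castSucc_inj, last_ne,
    not_false_eq_true, forall_const, and_comm, ite_and, compRingEquiv_symm_apply, comp_symm_apply,
    of_apply, RingHom.mapMatrix_apply, map_apply, addSite_apply, leftTensor_apply, one_apply,
    Fin.init, ite_mul, one_mul, zero_mul]
  congr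

theorem auxBlocks_K0m (N : ℕ) (u : ℂ) (α β : Bool) : auxBlocks N (K0m N u) α β = Km u α β • 1 := by
  ext o i
  simp [auxBlocks, K0m, one_apply]

theorem auxBlocks_K0m_succ (N : ℕ) (u : ℂ) :
    auxBlocks (N + 1) (K0m (N + 1) u) = (addSite ℂ N).mapMatrix (auxBlocks N (K0m N u)) := by
  ext α β : 1
  simp [auxBlocks_K0m, addSite, one_leftTensor_one]

theorem auxBlocks_Tmono_succ (N : ℕ) (u : ℂ) :
    auxBlocks (N + 1) (Tmono (N + 1) u) =
      (addSite ℂ N).mapMatrix (auxBlocks N (Tmono N u)) * leftLax u N := by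
  simp only [Tmono, List.ofFn_succ', List.concat_eq_append, List.prod_append, List.prod_singleton,
    map_mul, map_list_prod, List.map_ofFn, auxBlocks_R0i_last, Function.comp_def,
    auxBlocks_R0i_castSucc]

theorem auxBlocks_Tbar_succ (N : ℕ) (u : ℂ) :
    auxBlocks (N + 1) (Tbar (N + 1) u) =
      leftLax u N * (addSite ℂ N).mapMatrix (auxBlocks N (Tbar N u)) := by
  simp only [Tbar, Ri0_eq_R0i, List.ofFn_succ', List.concat_eq_append, List.reverse_append,
    List.reverse_singleton, List.prod_append, List.prod_singleton, map_mul, map_list_prod,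
    List.map_reverse, List.map_ofFn, auxBlocks_R0i_last, Function.comp_def, auxBlocks_R0i_castSucc]

/-- The auxiliary blocks of the double-row monodromy matrix `U^(N)(u)`: the pairs
`(true, true), (true, false), (false, true), (false, false)` give `𝒜, ℬ, 𝒞, 𝒟`. -/
def monodromy (N : ℕ) (u : ℂ) (p : Bool × Bool) : Matrix (Conf N) (Conf N) ℂ :=
  auxBlocks N (Umono N u) p.1 p.2

theorem monodromy_zero (u : ℂ) (p : Bool × Bool) : monodromy 0 u p = Km u p.1 p.2 • 1 := by
  simp [monodromy, Umono, Tbar, Tmono, auxBlocks_K0m]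

theorem monodromy_succ (N : ℕ) (u : ℂ) :
    monodromy (N + 1) u = dress (aF u) (bF u) (monodromy N u) := by
  have blocks : auxBlocks (N + 1) (Umono (N + 1) u) =
      leftLax u N * (addSite ℂ N).mapMatrix (auxBlocks N (Umono N u)) * leftLax u N := by
    simp only [Umono, map_mul, auxBlocks_Tmono_succ, auxBlocks_Tbar_succ, auxBlocks_K0m_succ,
      mul_assoc]
  ext1 p
  simp only [monodromy, blocks, dress_apply, doubleLax, Fintype.sum_prod_type_right, mul_apply,
    leftLax, of_apply, RingHom.mapMatrix_apply, map_apply, addSite_apply, Finset.sum_mul,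
    leftTensor_mul_leftTensor, one_mul, mul_one]

end Monodromy

theorem cosh_ηc : cosh ηc = -1 / 2 := by
  have η_eq : ηc = ((Real.pi - Real.pi / 3 : ℝ) : ℂ) * I := by
    rw [ηc]
    push_cast
    ring
  rw [η_eq, cosh_mul_I, ← ofReal_cos, Real.cos_pi_sub, Real.cos_pi_div_three]
  norm_num

theorem sinh_ηc_sq : sinh ηc ^ 2 = -3 / 4 := by
  rw [sinh_sq, cosh_ηc]
  norm_num

theorem sinh_ηc_ne_zero : sinh ηc ≠ 0 := by
  intro h
  have := sinh_ηc_sq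
  norm_num [h] at this

theorem dF_eq (u : ℂ) : dF u = -aF u - bF u := by
  simp only [dF, aF, bF, sinh_add, sinh_sub, cosh_ηc]
  ring

theorem aF_sq_add (u : ℂ) : aF u ^ 2 + aF u * bF u + bF u ^ 2 = 1 := by
  have sinh_ne := sinh_ηc_ne_zero
  simp only [aF, bF, sinh_add, cosh_ηc]
  field_simp
  linear_combination 4 * sinh ηc ^ 2 * cosh_sq u + 4 * sinh u ^ 2 * sinh_ηc_sq

theorem sinh_add_two_mul_ηc (u : ℂ) : sinh (u + 2 * ηc) = sinh (u - ηc) := by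
  simp only [sinh_add, sinh_sub, cosh_two_mul, sinh_two_mul, cosh_ηc, sinh_ηc_sq]
  ring

theorem boundary_monodromy_zero (u : ℂ) (p : Bool × Bool) :
    boundary (aF u) (bF u) (monodromy 0 u) p = 0 := by
  obtain ⟨_ | _, _ | _⟩ := p
  case false.true =>
    simp only [boundary, boundaryCoeff, monodromy_zero, Fintype.sum_prod_type, Fintype.sum_bool,
      Km, of_apply, if_true, if_false, Bool.false_eq_true, Bool.true_eq_false, smul_mul,
      Matrix.one_mul, dF_eq]
    module
  all_goals simp [boundary, boundaryCoeff, monodromy_zero, Fintype.sum_prod_type, Km]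

theorem susy_mul_monodromy (m : ℕ) (u : ℂ) (p : Bool × Bool) :
    susy ℂ m * monodromy (m + 1) u p =
      dF u ^ 2 • (monodromy m u p * susy ℂ m)
        - (-1 : ℂ) ^ m • boundary (aF u) (bF u) (monodromy m u) p := by
  induction m generalizing p with
  | zero => simp [susy, boundary_monodromy_zero]
  | succ m ih =>
    have dressed_ih : 1 ⊠ susy ℂ m * monodromy (m + 2) u p =
        dF u ^ 2 • (monodromy (m + 1) u p * 1 ⊠ susy ℂ m)
          - (-1 : ℂ) ^ m • dress (aF u) (bF u) (boundary (aF u) (bF u) (monodromy m u)) p := by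
      have blockwise_ih : (fun q => susy ℂ m * monodromy (m + 1) u q) =
          dF u ^ 2 • (fun q => monodromy m u q * susy ℂ m)
            - (-1 : ℂ) ^ m • boundary (aF u) (bF u) (monodromy m u) := funext ih
      rw [monodromy_succ (m + 1), one_leftTensor_mul_dress, blockwise_ih, map_sub, map_smul,
        map_smul, monodromy_succ m, Pi.sub_apply, Pi.smul_apply, Pi.smul_apply,
        dress_mul_one_leftTensor]
    have merge : leftMerge ℂ m * monodromy (m + 2) u p =
        dF u ^ 2 • (monodromy (m + 1) u p * leftMerge ℂ m)
          + dress (aF u) (bF u) (boundary (aF u) (bF u) (monodromy m u)) p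
          + boundary (aF u) (bF u) (monodromy (m + 1) u) p := by
      rw [monodromy_succ (m + 1), monodromy_succ m, leftMerge_mul_dress_dress (aF_sq_add u), dF_eq]
    rw [susy, Matrix.add_mul, Matrix.mul_add, Matrix.smul_mul, Matrix.mul_smul, dressed_ih, merge]
    module

theorem Qop_mul_Aop (n : ℕ) (u : ℂ) :
    Qop n * Aop (n + 2) u = dF u ^ 2 • (Aop (n + 1) u * Qop n)
      - (-1 : ℂ) ^ (n + 1) • dF u • (Bop (n + 1) u * leftBra ℂ (n + 1) true) := by
  have boundary_eq : boundary (aF u) (bF u) (monodromy (n + 1) u) (true, true) =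
      dF u • (Bop (n + 1) u * leftBra ℂ (n + 1) true) := by
    have Bop_eq : monodromy (n + 1) u (true, false) = Bop (n + 1) u := rfl
    simp [boundary, boundaryCoeff, Fintype.sum_prod_type, dF_eq, Bop_eq]
  rw [Qop_eq_susy, ← boundary_eq]
  exact susy_mul_monodromy (n + 1) u (true, true)

theorem Qop_mul_Dop (n : ℕ) (u : ℂ) :
    Qop n * Dop (n + 2) u = dF u ^ 2 • (Dop (n + 1) u * Qop n)
      - (-1 : ℂ) ^ (n + 1) • bF u • (Bop (n + 1) u * leftBra ℂ (n + 1) true) := by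
  have boundary_eq : boundary (aF u) (bF u) (monodromy (n + 1) u) (false, false) =
      bF u • (Bop (n + 1) u * leftBra ℂ (n + 1) true) := by
    have Bop_eq : monodromy (n + 1) u (true, false) = Bop (n + 1) u := rfl
    simp [boundary, boundaryCoeff, Fintype.sum_prod_type, Bop_eq]
  rw [Qop_eq_susy, ← boundary_eq]
  exact susy_mul_monodromy (n + 1) u (false, false)

theorem tOp_eq (N : ℕ) (u : ℂ) : tOp N u = bF u • Aop N u - dF u • Dop N u := by
  rw [tOp, sinh_add_two_mul_ηc, bF, dF]

/-- for every `N = n+2 ≥ 2` and every `u ∈ ℂ`,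
`Q^(N) ∘ t^(N)(u) = d(u)² t^(N-1)(u) ∘ Q^(N)` (`Qop n = Q^(n+2)`). -/
theorem Q_transfer_matrix (n : ℕ) (u : ℂ) :
    Qop n * tOp (n + 2) u = dF u ^ 2 • (tOp (n + 1) u * Qop n) := by
  simp only [tOp_eq, Matrix.mul_sub, Matrix.sub_mul, Matrix.mul_smul, Matrix.smul_mul,
    Qop_mul_Aop, Qop_mul_Dop]
  module
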